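/- Assume |y_t| ≤ Y for all t, for some Y ∈ ℝ. Then for every T ≥ 1 and every comparator sequence u_1, …, u_T ∈ ℝ^d, the cumulative loss of LASER satisfies L_T(LASER) ≤ b‖u_1‖² + c·V + L_T({u_t}) + Y²·Σ_{t=1}^{T} x_tᵀ D_t^{-1} x_t, where V = Σ_{t=1}^{T-1} ‖u_{t+1} − u_t‖² and L_T({u_t}) = Σ_{t=1}^{T} (y_t − u_tᵀ x_t)². -/

import Mathlib

open Matrix Finset

/-- `D₀ = (bc/(c−b)) I`, `D_t = (D_{t-1}⁻¹ + c⁻¹ I)⁻¹ + x_t x_tᵀ` for `t ≥ 1`. -/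
noncomputable def Dmat (d : ℕ) (b c : ℝ) (x : ℕ → Fin d → ℝ) :
    ℕ → Matrix (Fin d) (Fin d) ℝ
  | 0 => (b * c / (c - b)) • 1
  | (t + 1) => ((Dmat d b c x t)⁻¹ + c⁻¹ • 1)⁻¹ + vecMulVec (x (t + 1)) (x (t + 1))

/-- `e₀ = 0`, `e_t = (I + c⁻¹ D_{t-1})⁻¹ e_{t-1} + y_t x_t` for `t ≥ 1`. -/
noncomputable def evec (d : ℕ) (b c : ℝ) (x : ℕ → Fin d → ℝ) (y : ℕ → ℝ) :
    ℕ → Fin d → ℝ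
  | 0 => 0
  | (t + 1) => (1 + c⁻¹ • Dmat d b c x t)⁻¹ *ᵥ evec d b c x y t + y (t + 1) • x (t + 1)

/-- LASER prediction at round `t + 1`:
`ŷ_{t+1} = x_{t+1}ᵀ D_{t+1}⁻¹ (I + c⁻¹ D_t)⁻¹ e_t`. -/
noncomputable def laserPred (d : ℕ) (b c : ℝ) (x : ℕ → Fin d → ℝ) (y : ℕ → ℝ)
    (t : ℕ) : ℝ :=
  x (t + 1) ⬝ᵥ ((Dmat d b c x (t + 1))⁻¹ *ᵥ
    ((1 + c⁻¹ • Dmat d b c x t)⁻¹ *ᵥ evec d b c x y t))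

/-- Cumulative squared loss of LASER over `T` rounds. -/
noncomputable def laserLoss (d : ℕ) (b c : ℝ) (x : ℕ → Fin d → ℝ) (y : ℕ → ℝ)
    (T : ℕ) : ℝ :=
  ∑ t ∈ Finset.range T, (y (t + 1) - laserPred d b c x y t) ^ 2

/-!
Writing `p_t = D_t⁻¹ e_t`, the potential `(v - p_t)ᵀ D_t (v - p_t)` is, up to an additive constant,
the smallest regularised loss of a comparator sequence ending in `v`. Two facts control it. A new
observation is a rank-one least-squares update, for which completing the square shows that LASER's
squared loss is paid for by the decrease of the potential, the loss of `v`, and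
`y_t² x_tᵀ D_t⁻¹ x_t`. Moving the comparator from `v` to `w` replaces `D_t` by the parallel sum of
`D_t` and `c I`, which costs at most `c ‖w - v‖²`. The initial `D₀` is chosen so that its parallel
sum with `c I` is `b I`.
-/

section CommRing

variable {R n : Type*} [CommRing R] {M : Matrix n n R} {x : n → R}

theorem isSymm_add_vecMulVec_self (hM : M.IsSymm) (x : n → R) : (M + vecMulVec x x).IsSymm :=
  hM.add (transpose_vecMulVec x x)

variable [Fintype n]

theorem dotProduct_mulVec_comm_of_isSymm (hM : M.IsSymm) (v w : n → R) :
    v ⬝ᵥ M *ᵥ w = w ⬝ᵥ M *ᵥ v := by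
  rw [dotProduct_mulVec, ← mulVec_transpose, hM.eq, dotProduct_comm]

theorem dotProduct_mulVec_sub_smul_of_isSymm (hM : M.IsSymm) {z : n → R} (hz : M *ᵥ z = x)
    (w : n → R) (r : R) :
    (w - r • z) ⬝ᵥ M *ᵥ (w - r • z) = w ⬝ᵥ M *ᵥ w - 2 * r * (x ⬝ᵥ w) + r ^ 2 * (x ⬝ᵥ z) := by
  have hzw : z ⬝ᵥ M *ᵥ w = x ⬝ᵥ w := by
    rw [dotProduct_mulVec_comm_of_isSymm hM, hz, dotProduct_comm]
  simp only [mulVec_sub, mulVec_smul, dotProduct_sub, sub_dotProduct, dotProduct_smul,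
    smul_dotProduct, smul_eq_mul, hz, hzw, dotProduct_comm _ x]
  ring

theorem dotProduct_add_vecMulVec_mulVec_self (M : Matrix n n R) (x w : n → R) :
    w ⬝ᵥ (M + vecMulVec x x) *ᵥ w = w ⬝ᵥ M *ᵥ w + (x ⬝ᵥ w) ^ 2 := by
  simp only [add_mulVec, vecMulVec_mulVec, dotProduct_add, op_smul_eq_smul, dotProduct_smul,
    smul_eq_mul, dotProduct_comm w x, sq]

variable [DecidableEq n]

theorem mulVec_inv_mulVec_of_isUnit (hM : IsUnit M) (v : n → R) : M *ᵥ (M⁻¹ *ᵥ v) = v := by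
  rw [mulVec_mulVec, mul_nonsing_inv _ ((isUnit_iff_isUnit_det _).1 hM), one_mulVec]

theorem inv_mulVec_mulVec_of_isUnit (hM : IsUnit M) (v : n → R) : M⁻¹ *ᵥ (M *ᵥ v) = v := by
  rw [mulVec_mulVec, nonsing_inv_mul _ ((isUnit_iff_isUnit_det _).1 hM), one_mulVec]

theorem inv_add_vecMulVec_mulVec_mulVec (hD : IsUnit (M + vecMulVec x x)) (p : n → R) :
    (M + vecMulVec x x)⁻¹ *ᵥ (M *ᵥ p) = p - (x ⬝ᵥ p) • ((M + vecMulVec x x)⁻¹ *ᵥ x) := by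
  have hMp : M *ᵥ p = (M + vecMulVec x x) *ᵥ p - (x ⬝ᵥ p) • x := by
    rw [add_mulVec, vecMulVec_mulVec, op_smul_eq_smul, add_sub_cancel_right]
  rw [hMp, mulVec_sub, mulVec_smul, inv_mulVec_mulVec_of_isUnit hD]

theorem leastSquares_update_eq (hM : M.IsSymm) (hD : IsUnit (M + vecMulVec x x)) (p v : n → R)
    (y : R) :
    (v - p) ⬝ᵥ M *ᵥ (v - p) + (y - v ⬝ᵥ x) ^ 2 =
      (v - (M + vecMulVec x x)⁻¹ *ᵥ (M *ᵥ p + y • x)) ⬝ᵥ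
          (M + vecMulVec x x) *ᵥ (v - (M + vecMulVec x x)⁻¹ *ᵥ (M *ᵥ p + y • x))
        + (1 - x ⬝ᵥ (M + vecMulVec x x)⁻¹ *ᵥ x) * (y - x ⬝ᵥ p) ^ 2 := by
  have hz := mulVec_inv_mulVec_of_isUnit hD x
  have hcenter : v - (M + vecMulVec x x)⁻¹ *ᵥ (M *ᵥ p + y • x) =
      (v - p) - (y - x ⬝ᵥ p) • ((M + vecMulVec x x)⁻¹ *ᵥ x) := by
    rw [mulVec_add, mulVec_smul, inv_add_vecMulVec_mulVec_mulVec hD]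
    module
  rw [hcenter, dotProduct_mulVec_sub_smul_of_isSymm (isSymm_add_vecMulVec_self hM x) hz,
    dotProduct_add_vecMulVec_mulVec_self, dotProduct_sub, dotProduct_comm v x]
  ring

theorem leverage_mul_one_sub_leverage (hD : IsUnit (M + vecMulVec x x)) :
    (x ⬝ᵥ (M + vecMulVec x x)⁻¹ *ᵥ x) * (1 - x ⬝ᵥ (M + vecMulVec x x)⁻¹ *ᵥ x) =
      ((M + vecMulVec x x)⁻¹ *ᵥ x) ⬝ᵥ M *ᵥ ((M + vecMulVec x x)⁻¹ *ᵥ x) := by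
  have h := dotProduct_add_vecMulVec_mulVec_self M x ((M + vecMulVec x x)⁻¹ *ᵥ x)
  rw [mulVec_inv_mulVec_of_isUnit hD, dotProduct_comm _ x] at h
  linear_combination h

theorem inv_one_add_smul_mulVec (hM : IsUnit M) (k : R) (v : n → R) :
    (1 + k • M)⁻¹ *ᵥ v = (M⁻¹ + k • 1)⁻¹ *ᵥ (M⁻¹ *ᵥ v) := by
  rw [mulVec_mulVec, ← Matrix.mul_inv_rev, mul_add,
    mul_nonsing_inv _ ((isUnit_iff_isUnit_det _).1 hM), mul_smul_comm, mul_one]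

end CommRing

theorem inv_smul_one {K n : Type*} [Field K] [Fintype n] [DecidableEq n] {a : K} (ha : a ≠ 0) :
    (a • (1 : Matrix n n K))⁻¹ = a⁻¹ • 1 :=
  inv_eq_right_inv (by rw [smul_mul_smul_comm, mul_inv_cancel₀ ha, one_smul, mul_one])

section Real

variable {n : Type*} {A B M : Matrix n n ℝ} {x : n → ℝ}

theorem posDef_add_vecMulVec_self [Finite n] (hM : M.PosDef) (x : n → ℝ) :
    (M + vecMulVec x x).PosDef :=
  hM.add_posSemidef (by simpa only [star_trivial] using posSemidef_vecMulVec_self_star x)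

variable [Fintype n]

theorem dotProduct_mulVec_self_nonneg (hM : M.PosSemidef) (v : n → ℝ) : 0 ≤ v ⬝ᵥ M *ᵥ v := by
  simpa only [star_trivial] using hM.dotProduct_mulVec_nonneg v

variable [DecidableEq n]

theorem two_mul_dotProduct_le_dotProduct_mulVec_add (hA : A.PosDef) (v w : n → ℝ) :
    2 * (w ⬝ᵥ v) ≤ v ⬝ᵥ A *ᵥ v + w ⬝ᵥ A⁻¹ *ᵥ w := by
  have hsquare := dotProduct_mulVec_sub_smul_of_isSymm
    (isHermitian_iff_isSymm.1 hA.isHermitian) (mulVec_inv_mulVec_of_isUnit hA.isUnit w) v 1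
  have hnonneg := dotProduct_mulVec_self_nonneg hA.posSemidef (v - (1 : ℝ) • A⁻¹ *ᵥ w)
  linarith

-- Add the Fenchel–Young inequalities for `A` and `B` at the common dual vector
-- `r = (A⁻¹ + B⁻¹)⁻¹ (v + w)`.
theorem dotProduct_inv_add_inv_inv_mulVec_le (hA : A.PosDef) (hB : B.PosDef) (v w : n → ℝ) :
    (v + w) ⬝ᵥ (A⁻¹ + B⁻¹)⁻¹ *ᵥ (v + w) ≤ v ⬝ᵥ A *ᵥ v + w ⬝ᵥ B *ᵥ w := by
  set r := (A⁻¹ + B⁻¹)⁻¹ *ᵥ (v + w) with hr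
  have hdual : r ⬝ᵥ A⁻¹ *ᵥ r + r ⬝ᵥ B⁻¹ *ᵥ r = r ⬝ᵥ v + r ⬝ᵥ w := by
    rw [← dotProduct_add, ← add_mulVec, hr,
      mulVec_inv_mulVec_of_isUnit (hA.inv.add hB.inv).isUnit, ← hr, dotProduct_add]
  have hv := two_mul_dotProduct_le_dotProduct_mulVec_add hA v r
  have hw := two_mul_dotProduct_le_dotProduct_mulVec_add hB w r
  rw [dotProduct_comm, dotProduct_add]
  linarith

theorem leastSquares_forward_update_le (hM : M.PosSemidef) (hD : IsUnit (M + vecMulVec x x))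
    (p v : n → ℝ) (y : ℝ) :
    (v - (M + vecMulVec x x)⁻¹ *ᵥ (M *ᵥ p + y • x)) ⬝ᵥ
          (M + vecMulVec x x) *ᵥ (v - (M + vecMulVec x x)⁻¹ *ᵥ (M *ᵥ p + y • x))
        + (y - x ⬝ᵥ (M + vecMulVec x x)⁻¹ *ᵥ (M *ᵥ p)) ^ 2 ≤
      (v - p) ⬝ᵥ M *ᵥ (v - p) + (y - v ⬝ᵥ x) ^ 2
        + y ^ 2 * (x ⬝ᵥ (M + vecMulVec x x)⁻¹ *ᵥ x) := by
  rw [leastSquares_update_eq (isHermitian_iff_isSymm.1 hM.isHermitian) hD,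
    inv_add_vecMulVec_mulVec_mulVec hD, dotProduct_sub, dotProduct_smul, smul_eq_mul]
  have hleverage := dotProduct_mulVec_self_nonneg hM ((M + vecMulVec x x)⁻¹ *ᵥ x)
  rw [← leverage_mul_one_sub_leverage hD] at hleverage
  -- The two sides differ by `ν (1 - ν) (x ⬝ᵥ p)²`, where `ν` is the leverage of `x`.
  linarith [mul_nonneg hleverage (sq_nonneg (x ⬝ᵥ p))]

end Real

theorem sum_sq_mul_le_sq_mul_sum {ι R : Type*} [CommRing R] [LinearOrder R] [IsStrictOrderedRing R]
    {s : Finset ι} {f g : ι → R} {C : R} (hf : ∀ i ∈ s, |f i| ≤ C) (hg : ∀ i ∈ s, 0 ≤ g i) :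
    ∑ i ∈ s, f i ^ 2 * g i ≤ C ^ 2 * ∑ i ∈ s, g i := by
  rw [mul_sum]
  exact sum_le_sum fun i hi ↦
    mul_le_mul_of_nonneg_right (sq_le_sq.2 ((hf i hi).trans (le_abs_self C))) (hg i hi)

section Laser

variable {d : ℕ} {b c : ℝ}

/-- The matrix `(D_t⁻¹ + c⁻¹ I)⁻¹`: the precision `D_t` after the comparator has been allowed to
drift at cost `c` per squared unit, before round `t + 1` is observed. -/
noncomputable def priorPrecision (d : ℕ) (b c : ℝ) (x : ℕ → Fin d → ℝ) (t : ℕ) :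
    Matrix (Fin d) (Fin d) ℝ :=
  ((Dmat d b c x t)⁻¹ + c⁻¹ • 1)⁻¹

/-- The weight vector `p_t = D_t⁻¹ e_t` maintained by LASER after `t` rounds. -/
noncomputable def laserEstimate (d : ℕ) (b c : ℝ) (x : ℕ → Fin d → ℝ) (y : ℕ → ℝ) (t : ℕ) :
    Fin d → ℝ :=
  (Dmat d b c x t)⁻¹ *ᵥ evec d b c x y t

/-- The potential `(v - p_t)ᵀ D_t (v - p_t)` of a comparator `v` after round `t`. -/
noncomputable def posteriorPotential (d : ℕ) (b c : ℝ) (x : ℕ → Fin d → ℝ) (y : ℕ → ℝ) (t : ℕ)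
    (v : Fin d → ℝ) : ℝ :=
  (v - laserEstimate d b c x y t) ⬝ᵥ Dmat d b c x t *ᵥ (v - laserEstimate d b c x y t)

/-- The potential `(v - p_t)ᵀ (D_t⁻¹ + c⁻¹ I)⁻¹ (v - p_t)` of a comparator `v` that may have drifted
since round `t`, before round `t + 1`. -/
noncomputable def priorPotential (d : ℕ) (b c : ℝ) (x : ℕ → Fin d → ℝ) (y : ℕ → ℝ) (t : ℕ)
    (v : Fin d → ℝ) : ℝ :=
  (v - laserEstimate d b c x y t) ⬝ᵥ priorPrecision d b c x t *ᵥ (v - laserEstimate d b c x y t)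

theorem priorPrecision_posDef_of_posDef (hc : 0 < c) {x : ℕ → Fin d → ℝ} {t : ℕ}
    (hD : (Dmat d b c x t).PosDef) : (priorPrecision d b c x t).PosDef :=
  (hD.inv.add (PosDef.one.smul (inv_pos.2 hc))).inv

theorem Dmat_posDef (hb : 0 < b) (hbc : b < c) (x : ℕ → Fin d → ℝ) (t : ℕ) :
    (Dmat d b c x t).PosDef := by
  have hc : 0 < c := hb.trans hbc
  induction t with
  | zero => exact PosDef.one.smul (div_pos (mul_pos hb hc) (sub_pos.2 hbc))
  | succ t ih => exact posDef_add_vecMulVec_self (priorPrecision_posDef_of_posDef hc ih) _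

theorem priorPrecision_posDef (hb : 0 < b) (hbc : b < c) (x : ℕ → Fin d → ℝ) (t : ℕ) :
    (priorPrecision d b c x t).PosDef :=
  priorPrecision_posDef_of_posDef (hb.trans hbc) (Dmat_posDef hb hbc x t)

theorem priorPrecision_zero (hb : 0 < b) (hbc : b < c) (x : ℕ → Fin d → ℝ) :
    priorPrecision d b c x 0 = b • 1 := by
  have hc : 0 < c := hb.trans hbc
  have hcb : c - b ≠ 0 := sub_ne_zero.2 hbc.ne'
  have hscalar : (b * c / (c - b))⁻¹ + c⁻¹ = b⁻¹ := by
    field_simp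
    ring
  rw [priorPrecision, Dmat, inv_smul_one (div_ne_zero (mul_pos hb hc).ne' hcb), ← add_smul, hscalar,
    inv_smul_one (inv_ne_zero hb.ne'), inv_inv]

theorem priorPrecision_mulVec_laserEstimate (hb : 0 < b) (hbc : b < c) (x : ℕ → Fin d → ℝ)
    (y : ℕ → ℝ) (t : ℕ) :
    priorPrecision d b c x t *ᵥ laserEstimate d b c x y t =
      (1 + c⁻¹ • Dmat d b c x t)⁻¹ *ᵥ evec d b c x y t :=
  (inv_one_add_smul_mulVec (Dmat_posDef hb hbc x t).isUnit c⁻¹ _).symm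

theorem priorPotential_zero (hb : 0 < b) (hbc : b < c) (x : ℕ → Fin d → ℝ) (y : ℕ → ℝ)
    (v : Fin d → ℝ) : priorPotential d b c x y 0 v = b * (v ⬝ᵥ v) := by
  rw [priorPotential, priorPrecision_zero hb hbc, laserEstimate, evec, mulVec_zero, sub_zero,
    smul_mulVec, one_mulVec, dotProduct_smul, smul_eq_mul]

theorem posteriorPotential_nonneg (hb : 0 < b) (hbc : b < c) (x : ℕ → Fin d → ℝ) (y : ℕ → ℝ)
    (t : ℕ) (v : Fin d → ℝ) : 0 ≤ posteriorPotential d b c x y t v :=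
  dotProduct_mulVec_self_nonneg (Dmat_posDef hb hbc x t).posSemidef _

theorem priorPotential_le_posteriorPotential_add (hb : 0 < b) (hbc : b < c) (x : ℕ → Fin d → ℝ)
    (y : ℕ → ℝ) (t : ℕ) (v w : Fin d → ℝ) :
    priorPotential d b c x y t w ≤
      posteriorPotential d b c x y t v + c * ((w - v) ⬝ᵥ (w - v)) := by
  have hc : 0 < c := hb.trans hbc
  have h := dotProduct_inv_add_inv_inv_mulVec_le (Dmat_posDef hb hbc x t) (PosDef.one.smul hc)
    (v - laserEstimate d b c x y t) (w - v)
  rwa [inv_smul_one hc.ne', smul_mulVec, one_mulVec, dotProduct_smul, smul_eq_mul,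
    sub_add_sub_cancel'] at h

theorem posteriorPotential_succ_add_sq_le (hb : 0 < b) (hbc : b < c) (x : ℕ → Fin d → ℝ)
    (y : ℕ → ℝ) (t : ℕ) (v : Fin d → ℝ) :
    posteriorPotential d b c x y (t + 1) v + (y (t + 1) - laserPred d b c x y t) ^ 2 ≤
      priorPotential d b c x y t v + (y (t + 1) - v ⬝ᵥ x (t + 1)) ^ 2
        + y (t + 1) ^ 2 * (x (t + 1) ⬝ᵥ (Dmat d b c x (t + 1))⁻¹ *ᵥ x (t + 1)) := by
  have h := leastSquares_forward_update_le (priorPrecision_posDef hb hbc x t).posSemidef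
    (Dmat_posDef hb hbc x (t + 1)).isUnit (laserEstimate d b c x y t) v (y (t + 1))
  rwa [priorPrecision_mulVec_laserEstimate hb hbc] at h

theorem laserLoss_succ_add_posteriorPotential_le (hb : 0 < b) (hbc : b < c) (x : ℕ → Fin d → ℝ)
    (y : ℕ → ℝ) (u : ℕ → Fin d → ℝ) (n : ℕ) :
    laserLoss d b c x y (n + 1) + posteriorPotential d b c x y (n + 1) (u (n + 1)) ≤
      b * (u 1 ⬝ᵥ u 1)
        + c * ∑ t ∈ range n, (u (t + 2) - u (t + 1)) ⬝ᵥ (u (t + 2) - u (t + 1))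
        + ∑ t ∈ range (n + 1), (y (t + 1) - u (t + 1) ⬝ᵥ x (t + 1)) ^ 2
        + ∑ t ∈ range (n + 1),
            y (t + 1) ^ 2 * (x (t + 1) ⬝ᵥ (Dmat d b c x (t + 1))⁻¹ *ᵥ x (t + 1)) := by
  induction n with
  | zero =>
    have hround := posteriorPotential_succ_add_sq_le hb hbc x y 0 (u 1)
    rw [priorPotential_zero hb hbc] at hround
    simp only [laserLoss, zero_add, range_one, sum_singleton, range_zero, sum_empty, mul_zero,
      add_zero] at hround ⊢
    linarith
  | succ n ih =>
    have hround := posteriorPotential_succ_add_sq_le hb hbc x y (n + 1) (u (n + 2))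
    have hdrift :=
      priorPotential_le_posteriorPotential_add hb hbc x y (n + 1) (u (n + 1)) (u (n + 2))
    simp only [laserLoss, sum_range_succ, mul_add] at ih ⊢
    linarith

end Laser

theorem laser_cumulative_loss_bound_general {d : ℕ} {b c : ℝ} (hb : 0 < b) (hbc : b < c)
    (x : ℕ → Fin d → ℝ) (y : ℕ → ℝ) {T : ℕ} (hT : 1 ≤ T) (u : ℕ → Fin d → ℝ) :
    laserLoss d b c x y T ≤
      b * (u 1 ⬝ᵥ u 1)
        + c * ∑ t ∈ range (T - 1), (u (t + 2) - u (t + 1)) ⬝ᵥ (u (t + 2) - u (t + 1))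
        + ∑ t ∈ range T, (y (t + 1) - u (t + 1) ⬝ᵥ x (t + 1)) ^ 2
        + ∑ t ∈ range T,
            y (t + 1) ^ 2 * (x (t + 1) ⬝ᵥ (Dmat d b c x (t + 1))⁻¹ *ᵥ x (t + 1)) := by
  obtain ⟨n, rfl⟩ := Nat.exists_eq_add_of_le' hT
  exact (le_add_of_nonneg_right (posteriorPotential_nonneg hb hbc x y (n + 1) (u (n + 1)))).trans
    (laserLoss_succ_add_posteriorPotential_le hb hbc x y u n)

theorem laser_cumulative_loss_bound (d : ℕ) (hd : 1 ≤ d) (b c : ℝ)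
    (hb : 0 < b) (hbc : b < c)
    (x : ℕ → Fin d → ℝ) (y : ℕ → ℝ) (Y : ℝ) (hY : ∀ t : ℕ, |y (t + 1)| ≤ Y)
    (T : ℕ) (hT : 1 ≤ T) (u : ℕ → Fin d → ℝ) :
    laserLoss d b c x y T ≤
      b * (u 1 ⬝ᵥ u 1)
        + c * ∑ t ∈ Finset.range (T - 1),
            (u (t + 2) - u (t + 1)) ⬝ᵥ (u (t + 2) - u (t + 1))
        + ∑ t ∈ Finset.range T, (y (t + 1) - u (t + 1) ⬝ᵥ x (t + 1)) ^ 2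
        + Y ^ 2 * ∑ t ∈ Finset.range T,
            x (t + 1) ⬝ᵥ ((Dmat d b c x (t + 1))⁻¹ *ᵥ x (t + 1)) := by
  refine (laser_cumulative_loss_bound_general hb hbc x y hT u).trans ?_
  gcongr
  exact sum_sq_mul_le_sq_mul_sum (fun t _ ↦ hY t) fun t _ ↦
    dotProduct_mulVec_self_nonneg (Dmat_posDef hb hbc x (t + 1)).inv.posSemidef _
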